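/- If there exists an RDSQS*(v), then there exists an RDSQS(4v). -/

import Mathlib

open Finset

/-- A parallel class on point set `Y`: a collection of blocks that partitions `Y`. -/
def IsParallelClass (Y : Finset ℕ) (P : Finset (Finset ℕ)) : Prop :=
  (∀ b ∈ P, b ⊆ Y) ∧ ∀ y ∈ Y, ∃! b, b ∈ P ∧ y ∈ b

/-- A block collection `B` on point set `Y` is resolvable if it can be partitioned
into parallel classes of `Y`. -/
def Resolvable (Y : Finset ℕ) (B : Finset (Finset ℕ)) : Prop :=
  ∃ (r : ℕ) (P : Fin r → Finset (Finset ℕ)),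
    (∀ i, IsParallelClass Y (P i)) ∧ (∀ i, P i ⊆ B) ∧ ∀ b ∈ B, ∃! i, b ∈ P i

/-- The blocks of the derived design at a point `x`:
`{B \ {x} : x ∈ B, B ∈ B}`. -/
def derivedBlocks (B : Finset (Finset ℕ)) (x : ℕ) : Finset (Finset ℕ) :=
  (B.filter fun b => x ∈ b).image fun b => b.erase x

/-- A Steiner system S(t, k, v) on point set `X` with block collection `B`. -/
def IsSteiner (t k v : ℕ) (X : Finset ℕ) (B : Finset (Finset ℕ)) : Prop :=
  X.card = v ∧ (∀ b ∈ B, b ⊆ X ∧ b.card = k) ∧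
  ∀ T ⊆ X, T.card = t → ∃! b, b ∈ B ∧ T ⊆ b

/-- An RDS(t, k, v): a Steiner system S(t, k, v) whose derived design at every
point is resolvable. -/
def IsRDS (t k v : ℕ) (X : Finset ℕ) (B : Finset (Finset ℕ)) : Prop :=
  IsSteiner t k v X B ∧ ∀ x ∈ X, Resolvable (X.erase x) (derivedBlocks B x)

/-- Existence of an RDS(t, k, v). -/
def ExistsRDS (t k v : ℕ) : Prop := ∃ X B, IsRDS t k v X B

/-- Existence of an RDSQS(v), i.e. an RDS(3, 4, v). -/
def ExistsRDSQS (v : ℕ) : Prop := ExistsRDS 3 4 v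

/-- A Kirkman triple system KTS(v): a resolvable Steiner triple system. -/
def IsKTS (v : ℕ) (X : Finset ℕ) (B : Finset (Finset ℕ)) : Prop :=
  IsSteiner 2 3 v X B ∧ Resolvable X B

/-- Existence of a large set of Kirkman triple systems LKTS(v): a partition of
all 3-element subsets of a v-element set into v - 2 classes, each a KTS(v). -/
def ExistsLKTS (v : ℕ) : Prop :=
  ∃ (X : Finset ℕ) (C : Fin (v - 2) → Finset (Finset ℕ)),
    X.card = v ∧ (∀ i, IsKTS v X (C i)) ∧
    (∀ T : Finset ℕ, (T ⊆ X ∧ T.card = 3) ↔ ∃ i, T ∈ C i) ∧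
    ∀ (T : Finset ℕ) (i j : Fin (v - 2)), T ∈ C i → T ∈ C j → i = j

/-- A t-wise balanced design S(t, K, v) with block sizes from the set `K`. -/
def IsTBD (t : ℕ) (K : Set ℕ) (v : ℕ) (X : Finset ℕ) (B : Finset (Finset ℕ)) : Prop :=
  X.card = v ∧ (∀ b ∈ B, b ⊆ X ∧ b.card ∈ K) ∧
  ∀ T ⊆ X, T.card = t → ∃! b, b ∈ B ∧ T ⊆ b

/-- A group divisible design GDD(t, K, g*n) of type g^n: `Gs` is a partition of
`X` into `n` groups of size `g`; blocks have sizes in `K`, meet every group in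
at most one point, and every t-subset of `X` meeting every group in at most one
point lies in exactly one block. -/
def IsGDD (t : ℕ) (K : Set ℕ) (g n : ℕ) (X : Finset ℕ)
    (Gs Bs : Finset (Finset ℕ)) : Prop :=
  X.card = g * n ∧ Gs.card = n ∧
  (∀ G ∈ Gs, G ⊆ X ∧ G.card = g) ∧
  (∀ x ∈ X, ∃! G, G ∈ Gs ∧ x ∈ G) ∧
  (∀ b ∈ Bs, b ⊆ X ∧ b.card ∈ K) ∧
  (∀ b ∈ Bs, ∀ G ∈ Gs, (b ∩ G).card ≤ 1) ∧
  ∀ T ⊆ X, T.card = t → (∀ G ∈ Gs, (T ∩ G).card ≤ 1) → ∃! b, b ∈ Bs ∧ T ⊆ b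

/-- An RDGDD(t, K, g*n) of type g^n: a GDD whose derived design at every point
(on point set `X \ G`, where `G` is the group of the point) is resolvable. -/
def IsRDGDD (t : ℕ) (K : Set ℕ) (g n : ℕ) (X : Finset ℕ)
    (Gs Bs : Finset (Finset ℕ)) : Prop :=
  IsGDD t K g n X Gs Bs ∧
  ∀ x ∈ X, ∀ G ∈ Gs, x ∈ G → Resolvable (X \ G) (derivedBlocks Bs x)

/-- An RDSQS*(v): an SQS(v) with v ≡ 1 (mod 3) such that, for every point `x`,
the derived blocks at `x` contain a parallel class `P'` (enumerated by `Bk`);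
the multiset consisting of each triple of `P'` three times and each remaining
derived triple twice can be partitioned into (v-1) parallel classes
`P k l` (k ranging over Fin ((v-1)/3), l over Fin 3); and for each `k` the three
parallel classes `P k l` share the common triple `Bk k`. -/
def IsRDSQSstar (v : ℕ) (X : Finset ℕ) (B : Finset (Finset ℕ)) : Prop :=
  IsSteiner 3 4 v X B ∧ v % 3 = 1 ∧
  ∀ x ∈ X, ∃ (P' : Finset (Finset ℕ)) (Bk : Fin ((v - 1) / 3) → Finset ℕ)
    (P : Fin ((v - 1) / 3) → Fin 3 → Finset (Finset ℕ)),
    P' ⊆ derivedBlocks B x ∧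
    IsParallelClass (X.erase x) P' ∧
    (∀ k, Bk k ∈ P') ∧
    (∀ b ∈ P', ∃ k, Bk k = b) ∧
    Function.Injective Bk ∧
    (∀ k l, IsParallelClass (X.erase x) (P k l)) ∧
    ((∑ k, ∑ l, (P k l).val) =
        3 • P'.val + 2 • ((derivedBlocks B x) \ P').val) ∧
    ∀ k l, Bk k ∈ P k l
def fx (i j : Fin 4) : Fin 4 := i ^^^ j

def pgN : ℕ := 4394900595452543425529389115707930069785981179822749038500188042799033195942191764478053805239503612005450514633153202114035763811933069539836266844994983828376571134601330242872184816165378888496666665448172170710073950120856900556314752399522402273648884176578771865935171467101293604417136597352610529280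

def dec7 (c : ℕ) : Option (Fin 3 × Fin 2) :=
  if c = 0 then none
  else some (⟨((c - 1) / 2) % 3, Nat.mod_lt _ (by norm_num)⟩, ⟨(c - 1) % 2, Nat.mod_lt _ (by norm_num)⟩)

def tbl (a i b j : Fin 4) : Option (Fin 3 × Fin 2) :=
  dec7 ((pgN / 16 ^ (16 * (4 * a.val + i.val) + (4 * b.val + j.val))) % 16)

theorem fx_comm (i j : Fin 4) : fx i j = fx j i := by revert i j; decide
theorem fx_self (i j : Fin 4) : fx (fx i i) j = j := by revert i j; decide
theorem fx_assoc (i j k : Fin 4) : fx (fx i j) k = fx i (fx j k) := by revert i j k; decide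
theorem fx_cancel (i j : Fin 4) : fx i (fx i j) = j := by revert i j; decide
theorem fx_self0 (i : Fin 4) : fx i i = 0 := by revert i; decide
theorem fx_zero (i : Fin 4) : fx i 0 = i := by revert i; decide

theorem tbl_symm : ∀ a i b j : Fin 4, tbl a i b j = tbl b j a i := by decide +kernel
theorem tbl_third : ∀ a i b j : Fin 4, ¬ (a = 0 ∧ i = 0) → ¬ (b = 0 ∧ j = 0) →
    ¬ (a = b ∧ i = j) → tbl a i (fx a b) (fx i j) = tbl a i b j := by decide +kernel
theorem tbl_zero : ∀ i j : Fin 4, tbl 0 i 0 j = none := by decide +kernel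
theorem tbl_ex : ∀ a i : Fin 4, ¬ (a = 0 ∧ i = 0) → ∀ c : Option (Fin 3 × Fin 2),
    ∃ b j, ¬ (b = 0 ∧ j = 0) ∧ ¬ (a = b ∧ i = j) ∧ tbl a i b j = c := by decide +kernel

def mw : Fin 4 → Fin 4 := ![0, 2, 3, 1]
def cls (a i b j : Fin 4) : Fin 4 :=
  fx (mw (if a = 1 then i else if b = 1 then j else fx i j))
    (if a = 2 then i else if b = 2 then j else fx i j)
theorem cls_symm : ∀ a i b j : Fin 4, a ≠ b → cls a i b j = cls b j a i := by decide +kernel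
theorem cls_third : ∀ a i b j : Fin 4, a ≠ 0 → b ≠ 0 → a ≠ b →
    cls a i (fx a b) (fx i j) = cls a i b j := by decide +kernel
theorem cls_ex : ∀ a i b : Fin 4, a ≠ 0 → b ≠ 0 → a ≠ b → ∀ s e : Fin 2,
    ∃ j, (cls a i b j).val / 2 = s.val ∧ (cls a i b j).val % 2 = e.val := by decide +kernel

/-- A Steiner skein. -/
structure Skein {α : Type} (q : α → α → α → α) : Prop where
  c12 : ∀ a b c, q a b c = q b a c
  c23 : ∀ a b c, q a b c = q a c b
  idem : ∀ a b, q a a b = b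
  inv : ∀ a b c, q a b (q a b c) = c

theorem Skein.ne {α : Type} {q : α → α → α → α} (h : Skein q) {a b c : α} (hbc : b ≠ c) :
    q a b c ≠ a := by
  intro e
  have h1 := h.inv a b c
  rw [e, h.c23, h.idem] at h1
  exact hbc h1

theorem Skein.ne2 {α : Type} {q : α → α → α → α} (h : Skein q) {a b c : α} (hac : a ≠ c) :
    q a b c ≠ b := by
  rw [h.c12]; exact h.ne hac

theorem Skein.ne3 {α : Type} {q : α → α → α → α} (h : Skein q) {a b c : α} (hac : a ≠ b) :
    q a b c ≠ c := by
  rw [h.c23]; exact h.ne2 hac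

def skBlock {α : Type} [DecidableEq α] (q : α → α → α → α) (s : Finset α) : Prop :=
  s.card = 4 ∧ ∀ a ∈ s, ∀ b ∈ s, ∀ c ∈ s, q a b c ∈ s

theorem skBlock_mk {α : Type} [DecidableEq α] {q : α → α → α → α} (h : Skein q) {a b c : α}
    (hab : a ≠ b) (hac : a ≠ c) (hbc : b ≠ c) : skBlock q {a, b, c, q a b c} := by
  have n1 := h.ne (a := a) hbc
  have n2 := h.ne2 (b := b) hac
  have n3 := h.ne3 (c := c) hab
  refine ⟨?_, ?_⟩
  · rw [card_insert_of_notMem, card_insert_of_notMem, card_insert_of_notMem, card_singleton] <;>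
      simp <;> tauto
  · obtain ⟨c12, c23, idem, inv⟩ := h
    have e1 : ∀ x y, q x y x = y := fun x y => by rw [c23, idem]
    have e2 : ∀ x y, q x y y = x := fun x y => by rw [c12, c23, idem]
    have f1 := inv a b c
    have f2 : q a c (q a b c) = b := by rw [c23 a b c]; exact inv a c b
    have f3 : q b c (q a b c) = a := by rw [c12 a b c, c23 b a c]; exact inv b c a
    obtain ⟨d, hd⟩ : ∃ d, q a b c = d := ⟨_, rfl⟩
    rw [hd] at f1 f2 f3 ⊢
    have g : ∀ x y z w, q x y z = w → q x z y = w ∧ q y x z = w ∧ q y z x = w ∧ q z x y = w ∧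
      q z y x = w := by
      intro x y z w hh
      refine ⟨?_, ?_, ?_, ?_, ?_⟩
      · rw [c23]; exact hh
      · rw [c12]; exact hh
      · rw [c23, c12]; exact hh
      · rw [c12, c23]; exact hh
      · rw [c12, c23, c12]; exact hh
    obtain ⟨a1, a2, a3, a4, a5⟩ := g _ _ _ _ hd
    obtain ⟨b1, b2, b3, b4, b5⟩ := g _ _ _ _ f1
    obtain ⟨d1, d2, d3, d4, d5⟩ := g _ _ _ _ f2
    obtain ⟨l1, l2, l3, l4, l5⟩ := g _ _ _ _ f3
    clear g c12 c23 inv n1 n2 n3 hab hac hbc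
    intro x hx y hy z hz
    simp only [mem_insert, mem_singleton] at hx hy hz ⊢
    rcases hx with hx | hx | hx | hx <;> rcases hy with hy | hy | hy | hy <;>
      rcases hz with hz | hz | hz | hz <;> rw [hx, hy, hz] <;>
      simp only [idem, e1, e2, hd, f1, f2, f3, a1, a2, a3, a4, a5, b1, b2, b3, b4, b5,
        d1, d2, d3, d4, d5, l1, l2, l3, l4, l5, true_or, or_true]

theorem skBlock_eq {α : Type} [DecidableEq α] {q : α → α → α → α} (h : Skein q) {s : Finset α}
    (hs : skBlock q s) {a b c : α} (hab : a ≠ b) (hac : a ≠ c) (hbc : b ≠ c)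
    (ha : a ∈ s) (hb : b ∈ s) (hc : c ∈ s) : s = {a, b, c, q a b c} := by
  symm
  apply Finset.eq_of_subset_of_card_le
  · intro x hx
    simp only [mem_insert, mem_singleton] at hx
    rcases hx with rfl | rfl | rfl | rfl
    · exact ha
    · exact hb
    · exact hc
    · exact hs.2 _ ha _ hb _ hc
  · rw [hs.1, (skBlock_mk h hab hac hbc).1]

theorem tri_eq {α : Type} [DecidableEq α] {q : α → α → α → α} (h : Skein q) {p a b x y : α}
    (ha : a ≠ p) (hb : b ≠ p) (hab : a ≠ b) (hxy : x ≠ y)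
    (hx : x ∈ ({a, b, q p a b} : Finset α)) (hy : y ∈ ({a, b, q p a b} : Finset α)) :
    ({x, y, q p x y} : Finset α) = {a, b, q p a b} := by
  have e1 : q p b a = q p a b := by rw [h.c23]
  have e2 : q p a (q p a b) = b := h.inv _ _ _
  have e3 : q p b (q p a b) = a := by rw [← e1]; exact h.inv _ _ _
  have e4 : q p (q p a b) a = b := by rw [h.c23]; exact e2
  have e5 : q p (q p a b) b = a := by rw [h.c23]; exact e3
  simp only [mem_insert, mem_singleton] at hx hy
  rcases hx with hx | hx | hx <;> rcases hy with hy | hy | hy <;> subst hx <;> subst hy <;>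
    first
    | exact absurd rfl hxy
    | (simp only [e1, e2, e3, e4, e5]; done)
    | (simp only [e1, e2, e3, e4, e5]; ext z; simp only [mem_insert, mem_singleton]; tauto)

theorem tri_ok {α : Type} [DecidableEq α] {q : α → α → α → α} (h : Skein q) {p a b x : α}
    (ha : a ≠ p) (hb : b ≠ p) (hab : a ≠ b)
    (hx : x ∈ ({a, b, q p a b} : Finset α)) : x ≠ p := by
  simp only [mem_insert, mem_singleton] at hx
  rcases hx with rfl | rfl | rfl
  · exact ha
  · exact hb
  · exact h.ne hab

theorem tri_col {α ι : Type} [DecidableEq α] {q : α → α → α → α} (h : Skein q) {p a b x y : α}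
    {col : α → α → ι}
    (cs : ∀ a b, a ≠ p → b ≠ p → a ≠ b → col a b = col b a)
    (ct : ∀ a b, a ≠ p → b ≠ p → a ≠ b → col a (q p a b) = col a b)
    (ha : a ≠ p) (hb : b ≠ p) (hab : a ≠ b) (hxy : x ≠ y)
    (hx : x ∈ ({a, b, q p a b} : Finset α)) (hy : y ∈ ({a, b, q p a b} : Finset α)) :
    col x y = col a b := by
  have hc : q p a b ≠ p := h.ne hab
  have hca : q p a b ≠ a := h.ne2 hb.symm
  have hcb : q p a b ≠ b := h.ne3 ha.symm
  have e1 : q p b a = q p a b := by rw [h.c23]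
  have k1 := cs a b ha hb hab
  have k2 := ct a b ha hb hab
  have k3 := ct b a hb ha hab.symm
  rw [e1] at k3
  have k4 := cs a _ ha hc hca.symm
  have k5 := cs b _ hb hc hcb.symm
  simp only [mem_insert, mem_singleton] at hx hy
  rcases hx with hx | hx | hx <;> rcases hy with hy | hy | hy <;> subst hx <;> subst hy <;>
    first
    | exact absurd rfl hxy
    | grind

theorem col_unique {α ι : Type} [DecidableEq α] [Fintype α] [Fintype ι] [DecidableEq ι]
    {q : α → α → α → α} (h : Skein q)
    {p : α} (hcard : 2 * Fintype.card ι + 2 = Fintype.card α)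
    {col : α → α → ι}
    (ct : ∀ a b, a ≠ p → b ≠ p → a ≠ b → col a (q p a b) = col a b)
    (ce : ∀ a, a ≠ p → ∀ i, ∃ b, b ≠ p ∧ a ≠ b ∧ col a b = i)
    {a b c : α} (ha : a ≠ p) (hb : b ≠ p) (hc : c ≠ p) (hab : a ≠ b) (hac : a ≠ c)
    (hbc : col a b = col a c) : c = b ∨ c = q p a b := by
  choose g g1 g2 g3 using ce a ha
  let F : ι × Bool → {x : α // x ≠ p ∧ x ≠ a} := fun t =>
    if t.2 then ⟨g t.1, g1 _, (g2 _).symm⟩ else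
      ⟨q p a (g t.1), h.ne (g2 _), h.ne2 (g1 _).symm⟩
  have hF : Function.Injective F := by
    have key : ∀ t, col a (F t).1 = t.1 := by
      rintro ⟨i, b⟩
      cases b
      · simp [F, ct a _ ha (g1 i) (g2 i), g3]
      · simp [F, g3]
    rintro ⟨i, s⟩ ⟨j, t⟩ hst
    have hij : i = j := by
      have := key (i, s)
      rw [hst, key] at this
      exact this.symm
    subst hij
    have n3 := h.ne3 (c := g i) ha.symm
    cases s <;> cases t <;> simp [F, n3, n3.symm] at hst ⊢
  have hcd : Fintype.card {x : α // x ≠ p ∧ x ≠ a} = Fintype.card α - 2 := by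
    rw [Fintype.card_subtype]
    have : (univ.filter fun x : α => x ≠ p ∧ x ≠ a) = ({p, a} : Finset α)ᶜ := by
      ext x; simp
    rw [this, card_compl, card_pair ha.symm]
  have hS : Function.Bijective F := by
    rw [Fintype.bijective_iff_injective_and_card]
    refine ⟨hF, ?_⟩
    rw [hcd]; simp; omega
  have hyp : ∀ x, x ≠ p → a ≠ x → x = g (col a x) ∨ x = q p a (g (col a x)) := by
    intro x hx hax
    obtain ⟨⟨i, t⟩, ht⟩ := hS.2 ⟨x, hx, hax.symm⟩
    have hv := congrArg Subtype.val ht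
    cases t
    · simp [F] at hv
      subst hv
      right
      rw [ct a _ ha (g1 i) (g2 i), g3]
    · simp [F] at hv
      subst hv
      left; rw [g3]
  have hb' := hyp b hb hab
  have hc' := hyp c hc hac
  rw [← hbc] at hc'
  generalize g (col a b) = u at *
  have := h.inv p a u
  rcases hb' with r | r <;> rcases hc' with s | s <;> simp_all

theorem generic {α ι : Type} [DecidableEq α] [Fintype α] [Fintype ι] [DecidableEq ι]
    {q : α → α → α → α} (h : Skein q)
    (hcard : 2 * Fintype.card ι + 2 = Fintype.card α)
    (hcol : ∀ p : α, ∃ col : α → α → ι,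
      (∀ a b, a ≠ p → b ≠ p → a ≠ b → col a b = col b a) ∧
      (∀ a b, a ≠ p → b ≠ p → a ≠ b → col a (q p a b) = col a b) ∧
      (∀ a, a ≠ p → ∀ i, ∃ b, b ≠ p ∧ a ≠ b ∧ col a b = i)) :
    ExistsRDSQS (Fintype.card α) := by
  classical
  let f : α ↪ ℕ := (Fintype.equivFin α).toEmbedding.trans Fin.valEmbedding
  let Bl : Finset (Finset ℕ) := (univ.filter fun s : Finset α => skBlock q s).image fun s => s.map f
  have hBl : ∀ b, b ∈ Bl ↔ ∃ s, skBlock q s ∧ s.map f = b := by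
    intro b; simp [Bl]
  refine ⟨univ.map f, Bl, ⟨by simp, ?_, ?_⟩, ?_⟩
  · intro b hb
    obtain ⟨s, hs, rfl⟩ := (hBl b).1 hb
    exact ⟨map_subset_map.2 (subset_univ _), by rw [card_map]; exact hs.1⟩
  · intro T hT hT3
    obtain ⟨t, -, rfl⟩ := subset_map_iff.1 hT
    rw [card_map, card_eq_three] at hT3
    obtain ⟨a, b, c, hab, hac, hbc, rfl⟩ := hT3
    refine ⟨({a, b, c, q a b c} : Finset α).map f, ⟨(hBl _).2 ⟨_, skBlock_mk h hab hac hbc, rfl⟩, ?_⟩, ?_⟩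
    · apply map_subset_map.2
      intro x; simp only [mem_insert, mem_singleton]; tauto
    · rintro b' ⟨hb', hsub⟩
      obtain ⟨s, hs, rfl⟩ := (hBl _).1 hb'
      rw [map_subset_map] at hsub
      rw [skBlock_eq h hs hab hac hbc (hsub (by simp)) (hsub (by simp)) (hsub (by simp))]
  · intro x hx
    obtain ⟨p, -, rfl⟩ := mem_map.1 hx
    obtain ⟨col, cs, ct, ce⟩ := hcol p
    have hD : ∀ b, b ∈ derivedBlocks Bl (f p) ↔ ∃ y z, y ≠ p ∧ z ≠ p ∧ y ≠ z ∧
        ({y, z, q p y z} : Finset α).map f = b := by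
      intro b
      have herase : ∀ y z, y ≠ p → z ≠ p → y ≠ z →
          ({p, y, z, q p y z} : Finset α).erase p = {y, z, q p y z} := by
        intro y z hy hz hyz
        rw [erase_insert]
        simp only [mem_insert, mem_singleton, not_or]
        exact ⟨hy.symm, hz.symm, (h.ne hyz).symm⟩
      constructor
      · intro hb
        simp only [derivedBlocks, mem_image, mem_filter] at hb
        obtain ⟨b', ⟨hb1, hb2⟩, rfl⟩ := hb
        obtain ⟨s, hs, rfl⟩ := (hBl _).1 hb1
        have hps : p ∈ s := by simpa using hb2
        have h3 : 1 < (s.erase p).card := by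
          rw [card_erase_of_mem hps, hs.1]; norm_num
        obtain ⟨y, hy, z, hz, hyz⟩ := one_lt_card.1 h3
        rw [mem_erase] at hy hz
        refine ⟨y, z, hy.1, hz.1, hyz, ?_⟩
        rw [← map_erase, ← herase y z hy.1 hz.1 hyz,
          ← skBlock_eq h hs hy.1.symm hz.1.symm hyz hps hy.2 hz.2]
      · rintro ⟨y, z, hy, hz, hyz, rfl⟩
        simp only [derivedBlocks, mem_image, mem_filter]
        refine ⟨({p, y, z, q p y z} : Finset α).map f,
          ⟨(hBl _).2 ⟨_, skBlock_mk h hy.symm hz.symm hyz, rfl⟩, ?_⟩, ?_⟩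
        · simp
        · rw [← map_erase, herase y z hy hz hyz]
    let e := Fintype.equivFin ι
    let P : Fin (Fintype.card ι) → Finset (Finset ℕ) := fun i =>
      (univ.filter fun t : α × α => t.1 ≠ p ∧ t.2 ≠ p ∧ t.1 ≠ t.2 ∧ col t.1 t.2 = e.symm i).image
        fun t => ({t.1, t.2, q p t.1 t.2} : Finset α).map f
    have hP : ∀ i b, b ∈ P i ↔ ∃ y z, y ≠ p ∧ z ≠ p ∧ y ≠ z ∧ col y z = e.symm i ∧
        ({y, z, q p y z} : Finset α).map f = b := by
      intro i b
      simp only [P, mem_image, mem_filter, mem_univ, true_and, Prod.exists]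
      constructor
      · rintro ⟨y, z, ⟨h1, h2, h3, h4⟩, h5⟩
        exact ⟨y, z, h1, h2, h3, h4, h5⟩
      · rintro ⟨y, z, h1, h2, h3, h4, h5⟩
        exact ⟨y, z, ⟨h1, h2, h3, h4⟩, h5⟩
    refine ⟨_, P, ?_, ?_, ?_⟩
    · intro i
      constructor
      · intro b hb
        obtain ⟨y, z, hy, hz, hyz, hc, rfl⟩ := (hP i b).1 hb
        rw [← map_erase]
        apply map_subset_map.2
        intro w hw
        exact mem_erase.2 ⟨tri_ok h hy hz hyz hw, mem_univ _⟩
      · intro y hy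
        rw [← map_erase, mem_map] at hy
        obtain ⟨a, ha, rfl⟩ := hy
        have ha := (mem_erase.1 ha).1
        obtain ⟨b, hb, hab, hc⟩ := ce a ha (e.symm i)
        refine ⟨_, ⟨(hP i _).2 ⟨a, b, ha, hb, hab, hc, rfl⟩, by simp⟩, ?_⟩
        rintro T ⟨hT, haT⟩
        obtain ⟨y, z, hy, hz, hyz, hc', rfl⟩ := (hP i _).1 hT
        rw [mem_map'] at haT
        congr 1
        have : ∃ w ∈ ({y, z, q p y z} : Finset α), a ≠ w := by
          by_cases hay : a = y
          · exact ⟨z, by simp, by rw [hay]; exact hyz⟩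
          · exact ⟨y, by simp, hay⟩
        obtain ⟨w, hw, haw⟩ := this
        have e1 := tri_eq h hy hz hyz haw haT hw
        have e2 := tri_col h cs ct hy hz hyz haw haT hw
        rw [← e1]
        have hwp := tri_ok h hy hz hyz hw
        have := col_unique h hcard ct ce ha hb hwp hab haw (by rw [hc, e2, hc'])
        apply tri_eq h ha hb hab haw
        · simp
        · simp only [mem_insert, mem_singleton]; tauto
    · intro i b hb
      obtain ⟨y, z, hy, hz, hyz, hc, rfl⟩ := (hP i b).1 hb
      exact (hD _).2 ⟨y, z, hy, hz, hyz, rfl⟩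
    · intro b hb
      obtain ⟨y, z, hy, hz, hyz, rfl⟩ := (hD _).1 hb
      refine ⟨e (col y z), (hP _ _).2 ⟨y, z, hy, hz, hyz, by simp, rfl⟩, ?_⟩
      intro j hj
      obtain ⟨a, b, ha, hb, hab, hc, hm⟩ := (hP _ _).1 hj
      have hm := (map_injective f) hm
      have := tri_col h cs ct ha hb hab hyz (by rw [hm]; simp) (by rw [hm]; simp)
      rw [this, hc]; simp

def pq {X : Type} (q : X → X → X → X) (a b c : X × Fin 4) : X × Fin 4 :=
  (q a.1 b.1 c.1, fx (fx a.2 b.2) c.2)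

theorem pq_skein {X : Type} {q : X → X → X → X} (h : Skein q) : Skein (pq q) where
  c12 a b c := by
    simp only [pq, h.c12 a.1 b.1 c.1, fx_comm a.2 b.2]
  c23 a b c := by
    simp only [pq, h.c23 a.1 b.1 c.1, fx_assoc, fx_comm b.2 c.2]
  idem a b := by
    simp only [pq, h.idem, fx_self]
  inv a b c := by
    simp only [pq, h.inv, fx_cancel]

theorem col_exists {X τ : Type} [DecidableEq X] {q : X → X → X → X} (h : Skein q) (x : X)
    {m : ℕ} (kk : X → Fin m) (φ : X → Fin 4) (T : X → X → τ) (ψ : τ → X → Fin 4)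
    (occ : τ → ℕ → Fin m × Fin 3)
    (hφ : ∀ y, φ y = 0 ↔ y = x)
    (hinj : ∀ y z, y ≠ x → z ≠ x → kk y = kk z → φ y = φ z → y = z)
    (hthird : ∀ y z, y ≠ x → z ≠ x → y ≠ z → kk y = kk z →
      kk (q x y z) = kk y ∧ φ (q x y z) = fx (φ y) (φ z))
    (hsurj : ∀ k β, β ≠ 0 → ∃ z, z ≠ x ∧ kk z = k ∧ φ z = β)
    (Ts : ∀ y z, T y z = T z y)
    (Tt : ∀ y z, T y (q x y z) = T y z)
    (hψ : ∀ y z, y ≠ x → z ≠ x → y ≠ z → ψ (T y z) y ≠ 0 ∧ ψ (T y z) z ≠ 0 ∧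
      ψ (T y z) y ≠ ψ (T y z) z ∧ ψ (T y z) (q x y z) = fx (ψ (T y z) y) (ψ (T y z) z))
    (hP : ∀ y, y ≠ x → ∀ k l, kk y = k ∨ ∃ z, z ≠ x ∧ kk y ≠ kk z ∧ ∃ s : Fin 2,
      occ (T y z) s = (k, l))
    (i : Fin 4) :
    ∃ col : X × Fin 4 → X × Fin 4 → Option ((Fin m × Fin 3) × Fin 2),
      (∀ a b, a ≠ (x, i) → b ≠ (x, i) → a ≠ b → col a b = col b a) ∧
      (∀ a b, a ≠ (x, i) → b ≠ (x, i) → a ≠ b → col a (pq q (x, i) a b) = col a b) ∧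
      (∀ a, a ≠ (x, i) → ∀ c, ∃ b, b ≠ (x, i) ∧ a ≠ b ∧ col a b = c) := by
  have fx0 : ∀ j, fx i j = 0 → j = i := by revert i; decide
  have fxc : ∀ j k, fx i j = fx i k → j = k := by revert i; decide
  have fx3 : ∀ j k, fx i (fx (fx i j) k) = fx (fx i j) (fx i k) := by revert i; decide
  let col : X × Fin 4 → X × Fin 4 → Option ((Fin m × Fin 3) × Fin 2) := fun a b =>
    if a.1 = x ∨ b.1 = x ∨ kk a.1 = kk b.1 then
      (tbl (φ a.1) (fx i a.2) (φ b.1) (fx i b.2)).map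
        (fun t => ((if a.1 = x then kk b.1 else kk a.1, t.1), t.2))
    else
      some (occ (T a.1 b.1)
        ((cls (ψ (T a.1 b.1) a.1) (fx i a.2) (ψ (T a.1 b.1) b.1) (fx i b.2)).val / 2),
        ⟨(cls (ψ (T a.1 b.1) a.1) (fx i a.2) (ψ (T a.1 b.1) b.1) (fx i b.2)).val % 2,
          Nat.mod_lt _ (by norm_num)⟩)
  have hφx : φ x = 0 := (hφ x).2 rfl
  have hp : ∀ y j, ((y, j) : X × Fin 4) ≠ (x, i) → ¬ (φ y = 0 ∧ fx i j = 0) := by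
    rintro y j hne ⟨h1, h2⟩
    exact hne (by rw [(hφ y).1 h1, fx0 j h2])
  have hqx : ∀ z, q x x z = z := fun z => h.idem x z
  have hqx2 : ∀ y, q x y x = y := fun y => by rw [h.c23, h.idem]
  have hqy : ∀ y, q x y y = x := fun y => by rw [h.c12, h.c23, h.idem]
  have hpg : ∀ y z, (y = x ∨ z = x ∨ kk y = kk z) →
      (y = x ∨ q x y z = x ∨ kk y = kk (q x y z)) ∧ φ (q x y z) = fx (φ y) (φ z) := by
    intro y z hyz
    by_cases h1 : y = x
    · subst h1
      rw [hqx, hφx, fx_comm, fx_zero]; simp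
    by_cases h2 : z = x
    · subst h2
      rw [hqx2, hφx, fx_zero]; simp
    by_cases h3 : y = z
    · subst h3
      rw [hqy, fx_self0, hφx]; simp
    have h4 : kk y = kk z := by tauto
    have := hthird y z h1 h2 h3 h4
    exact ⟨Or.inr (Or.inr this.1.symm), this.2⟩
  have hpgne : ∀ y z, (y = x ∨ z = x ∨ kk y = kk z) → φ y = φ z → y = z := by
    intro y z hyz hf
    by_cases h1 : y = x
    · subst h1
      rw [hφx] at hf
      exact ((hφ z).1 hf.symm).symm
    by_cases h2 : z = x
    · subst h2
      rw [hφx] at hf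
      exact ((hφ y).1 hf)
    exact hinj y z h1 h2 (by tauto) hf
  refine ⟨col, ?_, ?_, ?_⟩
  · rintro ⟨y, j⟩ ⟨z, k⟩ ha hb hab
    simp only [col]
    by_cases hc : y = x ∨ z = x ∨ kk y = kk z
    · have hc' : z = x ∨ y = x ∨ kk z = kk y := by
        rcases hc with h1 | h1 | h1
        · exact Or.inr (Or.inl h1)
        · exact Or.inl h1
        · exact Or.inr (Or.inr h1.symm)
      rw [if_pos hc, if_pos hc', tbl_symm]
      by_cases h1 : y = x
      · by_cases h2 : z = x
        · subst h1 h2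
          simp
        · simp [h1, h2]
      · by_cases h2 : z = x
        · simp [h1, h2]
        · have : kk y = kk z := by tauto
          simp [h1, h2, this]
    · have hc' : ¬ (z = x ∨ y = x ∨ kk z = kk y) := by
        intro h1; apply hc
        rcases h1 with h1 | h1 | h1
        · exact Or.inr (Or.inl h1)
        · exact Or.inl h1
        · exact Or.inr (Or.inr h1.symm)
      rw [if_neg hc, if_neg hc', Ts z y]
      push Not at hc
      have hyz : y ≠ z := fun e => hc.2.2 (by rw [e])
      rw [cls_symm _ _ _ _ (hψ y z hc.1 hc.2.1 hyz).2.2.1]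
  · rintro ⟨y, j⟩ ⟨z, k⟩ ha hb hab
    simp only [col, pq]
    rw [fx3]
    by_cases hc : y = x ∨ z = x ∨ kk y = kk z
    · obtain ⟨hc', hf⟩ := hpg y z hc
      rw [if_pos hc, if_pos hc', hf, tbl_third _ _ _ _ (hp _ _ ha) (hp _ _ hb)]
      · by_cases h1 : y = x
        · subst h1; rw [hqx]
        · simp [h1]
      · rintro ⟨h1, h2⟩
        apply hab
        rw [hpgne y z hc h1, fxc _ _ h2]
    · have hc' : ¬ (y = x ∨ q x y z = x ∨ kk y = kk (q x y z)) := by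
        intro h1
        have := (hpg y _ h1).1
        rw [h.inv] at this
        exact hc this
      rw [if_neg hc, if_neg hc', Tt]
      push Not at hc
      have hyz : y ≠ z := fun e => hc.2.2 (by rw [e])
      obtain ⟨p1, p2, p3, p4⟩ := hψ y z hc.1 hc.2.1 hyz
      simp only [p4, cls_third _ (fx i j) _ (fx i k) p1 p2 p3]
  · rintro ⟨y, j⟩ ha
    have real : ∀ k, (y ≠ x → kk y = k) → ∀ c : Option (Fin 3 × Fin 2), ∃ b, b ≠ (x, i) ∧ (y, j) ≠ b ∧
        col (y, j) b = c.map (fun t => ((k, t.1), t.2)) := by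
      intro k hk c
      obtain ⟨β, j', hn, hn2, ht⟩ := tbl_ex (φ y) (fx i j) (hp _ _ ha) c
      have hj' : fx i (fx i j') = j' := fx_cancel _ _
      by_cases hβ : β = 0
      · refine ⟨(x, fx i j'), ?_, ?_, ?_⟩
        · intro hh
          apply hn
          refine ⟨hβ, ?_⟩
          have h2 : fx i j' = i := (Prod.ext_iff.1 hh).2
          rw [← hj', h2]; exact fx_self0 _
        · intro hh
          apply hn2
          have h1 := (Prod.ext_iff.1 hh).1
          have h2 := (Prod.ext_iff.1 hh).2
          simp only at h1 h2
          rw [h1, hφx, hβ, h2, hj']; simp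
        · simp only [col]
          rw [if_pos (by simp), hj', hφx, ← hβ, ht]
          by_cases h1 : y = x
          · have : c = none := by rw [← ht, h1, hφx, hβ, tbl_zero]
            rw [this]; rfl
          · simp [h1, hk h1]
      · obtain ⟨z, hz, hzk, hzf⟩ := hsurj k β hβ
        refine ⟨(z, fx i j'), ?_, ?_, ?_⟩
        · intro hh
          exact hz (Prod.ext_iff.1 hh).1
        · intro hh
          apply hn2
          have h1 := (Prod.ext_iff.1 hh).1
          have h2 := (Prod.ext_iff.1 hh).2
          simp only at h1 h2
          rw [h1, hzf, h2, hj']; simp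
        · simp only [col]
          rw [hj', hzf, ht, hzk]
          by_cases h1 : y = x
          · simp [h1]
          · simp [h1, hk h1]
    rintro (_ | ⟨⟨k, l⟩, e⟩)
    · by_cases h1 : y = x
      · subst h1
        have : ∀ i j : Fin 4, ∃ j', j' ≠ i ∧ j ≠ j' := by decide
        obtain ⟨j', h1, h2⟩ := this i j
        refine ⟨(y, j'), by simpa using h1, by simpa using h2, ?_⟩
        simp [col, hφx, tbl_zero]
      · simpa using real (kk y) (fun _ => rfl) none
    · by_cases h1 : y ≠ x → kk y = k
      · simpa using real k h1 (some (l, e))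
      · push Not at h1
        obtain ⟨hyx, hk⟩ := h1
        obtain h2 | ⟨z, hz, hkz, s, hs⟩ := hP y hyx k l
        · exact absurd h2 hk
        have hyz : y ≠ z := fun e => hkz (by rw [e])
        obtain ⟨p1, p2, p3, p4⟩ := hψ y z hyx hz hyz
        obtain ⟨j', q1, q2⟩ := cls_ex _ (fx i j) _ p1 p2 p3 s e
        refine ⟨(z, fx i j'), ?_, ?_, ?_⟩
        · intro hh; exact hz (Prod.ext_iff.1 hh).1
        · intro hh; exact hyz (Prod.ext_iff.1 hh).1
        · simp only [col]
          rw [if_neg (by tauto)]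
          simp only [fx_cancel, q1, q2, hs]

theorem psi_exists : ∃ ψ : Finset ℕ → ℕ → Fin 4, ∀ T : Finset ℕ, T.card = 3 →
    (∀ y ∈ T, ψ T y ≠ 0) ∧ (∀ y ∈ T, ∀ z ∈ T, ψ T y = ψ T z → y = z) ∧
    (∀ β, β ≠ 0 → ∃ y ∈ T, ψ T y = β) ∧
    (∀ y ∈ T, ∀ z ∈ T, ∀ w ∈ T, y ≠ z → w ≠ y → w ≠ z → ψ T w = fx (ψ T y) (ψ T z)) := by
  have : ∀ T : Finset ℕ, ∃ ψ : ℕ → Fin 4, T.card = 3 →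
    (∀ y ∈ T, ψ y ≠ 0) ∧ (∀ y ∈ T, ∀ z ∈ T, ψ y = ψ z → y = z) ∧
    (∀ β, β ≠ 0 → ∃ y ∈ T, ψ y = β) ∧
    (∀ y ∈ T, ∀ z ∈ T, ∀ w ∈ T, y ≠ z → w ≠ y → w ≠ z → ψ w = fx (ψ y) (ψ z)) := by
    intro T
    by_cases hT : T.card = 3
    · obtain ⟨a, b, c, hab, hac, hbc, rfl⟩ := card_eq_three.1 hT
      obtain ⟨f, fa, fb, fc⟩ : ∃ f : ℕ → Fin 4, f a = 1 ∧ f b = 2 ∧ f c = 3 :=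
        ⟨fun n => if n = a then 1 else if n = b then 2 else 3, by simp, by simp [hab.symm],
          by simp [hac.symm, hbc.symm]⟩
      refine ⟨f, fun _ => ⟨?_, ?_, ?_, ?_⟩⟩
      · simp [fa, fb, fc]
      · simp [fa, fb, fc]
      · intro β hβ
        have : β = 1 ∨ β = 2 ∨ β = 3 := by revert β; decide
        rcases this with rfl | rfl | rfl
        · exact ⟨a, by simp, fa⟩
        · exact ⟨b, by simp, fb⟩
        · exact ⟨c, by simp, fc⟩
      · intro y hy z hz w hw
        simp only [mem_insert, mem_singleton] at hy hz hw
        rcases hy with rfl | rfl | rfl <;> rcases hz with rfl | rfl | rfl <;>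
          rcases hw with rfl | rfl | rfl <;> intro h1 h2 h3 <;>
          first
          | exact absurd rfl h1
          | exact absurd rfl h2
          | exact absurd rfl h3
          | (rw [fa, fb, fc]; decide)
    · exact ⟨fun _ => 0, fun h => absurd h hT⟩
  choose ψ hψ using this
  exact ⟨ψ, hψ⟩

theorem skein_of {v : ℕ} {X : Finset ℕ} {B : Finset (Finset ℕ)} (hS : IsSteiner 3 4 v X B) :
    ∃ q : X → X → X → X, Skein q ∧ ∀ x y z : X, x ≠ y → x ≠ z → y ≠ z →
      ({x.1, y.1, z.1, (q x y z).1} : Finset ℕ) ∈ B := by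
  classical
  obtain ⟨-, hB, hU⟩ := hS
  have c3 : ∀ a b c : X, a ≠ b → a ≠ c → b ≠ c → ({a.1, b.1, c.1} : Finset ℕ) ⊆ X ∧
      ({a.1, b.1, c.1} : Finset ℕ).card = 3 := by
    intro a b c hab hac hbc
    constructor
    · intro t ht
      simp only [mem_insert, mem_singleton] at ht
      rcases ht with rfl | rfl | rfl
      exacts [a.2, b.2, c.2]
    · rw [card_eq_three]
      exact ⟨_, _, _, fun h => hab (Subtype.ext h), fun h => hac (Subtype.ext h),
        fun h => hbc (Subtype.ext h), rfl⟩
  have ex : ∀ a b c : X, ∃ d : X, a ≠ b → a ≠ c → b ≠ c → d ≠ a ∧ d ≠ b ∧ d ≠ c ∧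
      ({a.1, b.1, c.1, d.1} : Finset ℕ) ∈ B := by
    intro a b c
    by_cases hh : a ≠ b ∧ a ≠ c ∧ b ≠ c
    · obtain ⟨hab, hac, hbc⟩ := hh
      obtain ⟨h1, h2⟩ := c3 a b c hab hac hbc
      obtain ⟨s, ⟨hs, hsub⟩, -⟩ := hU _ h1 h2
      have hd : (s \ {a.1, b.1, c.1}).card = 1 := by
        rw [card_sdiff_of_subset hsub, (hB s hs).2, h2]
      obtain ⟨d, hd⟩ := card_eq_one.1 hd
      have hds : d ∈ s \ {a.1, b.1, c.1} := by rw [hd]; simp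
      rw [mem_sdiff] at hds
      simp only [mem_insert, mem_singleton, not_or] at hds
      refine ⟨⟨d, (hB s hs).1 hds.1⟩, fun _ _ _ => ⟨?_, ?_, ?_, ?_⟩⟩
      · intro h; exact hds.2.1 (congrArg Subtype.val h)
      · intro h; exact hds.2.2.1 (congrArg Subtype.val h)
      · intro h; exact hds.2.2.2 (congrArg Subtype.val h)
      · have : ({a.1, b.1, c.1, d} : Finset ℕ) = s := by
          have h3 := sdiff_union_of_subset hsub
          rw [hd] at h3
          rw [← h3]
          ext t; simp only [mem_insert, mem_singleton, mem_union]; tauto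
        rw [this]; exact hs
    · exact ⟨a, fun h1 h2 h3 => absurd ⟨h1, h2, h3⟩ hh⟩
  choose g hg using ex
  have U : ∀ a b c d : X, a ≠ b → a ≠ c → b ≠ c → d ≠ a → d ≠ b → d ≠ c →
      ({a.1, b.1, c.1, d.1} : Finset ℕ) ∈ B → g a b c = d := by
    intro a b c d hab hac hbc h1 h2 h3 hd
    obtain ⟨g1, g2, g3, g4⟩ := hg a b c hab hac hbc
    obtain ⟨k1, k2⟩ := c3 a b c hab hac hbc
    have sub : ∀ d : ℕ, ({a.1, b.1, c.1} : Finset ℕ) ⊆ {a.1, b.1, c.1, d} := by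
      intro d t; simp only [mem_insert, mem_singleton]; tauto
    have := (hU _ k1 k2).unique ⟨g4, sub _⟩ ⟨hd, sub _⟩
    have hm : (g a b c).1 ∈ ({a.1, b.1, c.1, d.1} : Finset ℕ) := by rw [← this]; simp
    simp only [mem_insert, mem_singleton] at hm
    rcases hm with h | h | h | h
    · exact absurd (Subtype.ext h) g1
    · exact absurd (Subtype.ext h) g2
    · exact absurd (Subtype.ext h) g3
    · exact Subtype.ext h
  have S12 : ∀ a b c : X, a ≠ b → a ≠ c → b ≠ c → g a b c = g b a c := by
    intro a b c hab hac hbc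
    obtain ⟨g1, g2, g3, g4⟩ := hg b a c hab.symm hbc hac
    refine U _ _ _ _ hab hac hbc g2 g1 g3 ?_
    rw [Finset.insert_comm]; exact g4
  have S23 : ∀ a b c : X, a ≠ b → a ≠ c → b ≠ c → g a b c = g a c b := by
    intro a b c hab hac hbc
    obtain ⟨g1, g2, g3, g4⟩ := hg a c b hac hab hbc.symm
    refine U _ _ _ _ hab hac hbc g1 g3 g2 ?_
    rw [Finset.insert_comm b.1]; exact g4
  have SI : ∀ a b c : X, a ≠ b → a ≠ c → b ≠ c → g a b (g a b c) = c := by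
    intro a b c hab hac hbc
    obtain ⟨g1, g2, g3, g4⟩ := hg a b c hab hac hbc
    refine U _ _ _ _ hab g1.symm g2.symm hac.symm hbc.symm g3.symm ?_
    rw [Finset.pair_comm]; exact g4
  refine ⟨fun a b c => if a = b then c else if b = c then a else if a = c then b else g a b c,
    ⟨?_, ?_, ?_, ?_⟩, ?_⟩
  · intro a b c
    have := S12 a b c
    grind
  · intro a b c
    have := S23 a b c
    grind
  · intro a b; simp
  · intro a b c
    have := SI a b c
    have := hg a b c
    grind
  · intro x y z h1 h2 h3
    simp only [if_neg h1, if_neg h2, if_neg h3]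
    exact (hg x y z h1 h2 h3).2.2.2

theorem cover_two {κ : Type} [DecidableEq κ] [Nonempty κ] (s : Finset κ) (hs : s.card ≤ 2) :
    ∃ f : ℕ → κ, ∀ a ∈ s, ∃ t : Fin 2, f t = a := by
  have : ∃ a b, s ⊆ {a, b} := by
    obtain ⟨x⟩ := ‹Nonempty κ›
    have : s.card = 0 ∨ s.card = 1 ∨ s.card = 2 := by omega
    rcases this with h | h | h
    · exact ⟨x, x, by rw [card_eq_zero.1 h]; simp⟩
    · obtain ⟨a, rfl⟩ := card_eq_one.1 h
      exact ⟨a, a, by simp⟩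
    · obtain ⟨a, b, -, rfl⟩ := card_eq_two.1 h
      exact ⟨a, b, subset_rfl⟩
  obtain ⟨a, b, h⟩ := this
  refine ⟨fun n => if n = 0 then a else b, fun c hc => ?_⟩
  have := h hc
  simp only [mem_insert, mem_singleton] at this
  rcases this with rfl | rfl
  · exact ⟨0, by simp⟩
  · exact ⟨1, by simp⟩

theorem col_of_star {v : ℕ} {X : Finset ℕ} {B : Finset (Finset ℕ)} (hS : IsSteiner 3 4 v X B)
    {q : X → X → X → X} (h : Skein q)
    (hqB : ∀ x y z : X, x ≠ y → x ≠ z → y ≠ z →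
      ({x.1, y.1, z.1, (q x y z).1} : Finset ℕ) ∈ B)
    {m : ℕ} (hm : 0 < m) (x : X) (P' : Finset (Finset ℕ)) (Bk : Fin m → Finset ℕ)
    (P : Fin m → Fin 3 → Finset (Finset ℕ))
    (hP'D : P' ⊆ derivedBlocks B x)
    (hP' : IsParallelClass (X.erase x) P')
    (hBk : ∀ k, Bk k ∈ P')
    (hBks : ∀ b ∈ P', ∃ k, Bk k = b)
    (hBki : Function.Injective Bk)
    (hP : ∀ k l, IsParallelClass (X.erase x) (P k l))
    (hsum : (∑ k, ∑ l, (P k l).val) = 3 • P'.val + 2 • ((derivedBlocks B x) \ P').val)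
    (hBP : ∀ k l, Bk k ∈ P k l) (i : Fin 4) :
    ∃ col : X × Fin 4 → X × Fin 4 → Option ((Fin m × Fin 3) × Fin 2),
      (∀ a b, a ≠ (x, i) → b ≠ (x, i) → a ≠ b → col a b = col b a) ∧
      (∀ a b, a ≠ (x, i) → b ≠ (x, i) → a ≠ b → col a (pq q (x, i) a b) = col a b) ∧
      (∀ a, a ≠ (x, i) → ∀ c, ∃ b, b ≠ (x, i) ∧ a ≠ b ∧ col a b = c) := by
  classical
  obtain ⟨-, hB, hU⟩ := hS
  have : Nonempty (Fin m × Fin 3) := ⟨(⟨0, hm⟩, 0)⟩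
  have Dcard : ∀ T ∈ derivedBlocks B x, T.card = 3 := by
    intro T hT
    simp only [derivedBlocks, mem_image, mem_filter] at hT
    obtain ⟨b, ⟨h1, h2⟩, rfl⟩ := hT
    rw [card_erase_of_mem h2, (hB b h1).2]
  have Deq : ∀ T ∈ derivedBlocks B x, ∀ y z : X, y ≠ z → y.1 ∈ T → z.1 ∈ T →
      ({y.1, z.1, (q x y z).1} : Finset ℕ) = T := by
    intro T hT y z hyz hy hz
    simp only [derivedBlocks, mem_image, mem_filter] at hT
    obtain ⟨b, ⟨h1, h2⟩, rfl⟩ := hT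
    rw [mem_erase] at hy hz
    have hyx : x ≠ y := fun e => hy.1 (by rw [e])
    have hzx : x ≠ z := fun e => hz.1 (by rw [e])
    have hmem := hqB x y z hyx hzx hyz
    have hsX : ({x.1, y.1, z.1} : Finset ℕ) ⊆ X := by
      intro t ht
      simp only [mem_insert, mem_singleton] at ht
      rcases ht with rfl | rfl | rfl
      exacts [x.2, y.2, z.2]
    have hc : ({x.1, y.1, z.1} : Finset ℕ).card = 3 := by
      rw [card_eq_three]
      exact ⟨_, _, _, fun h => hyx (Subtype.ext h), fun h => hzx (Subtype.ext h),
        fun h => hyz (Subtype.ext h), rfl⟩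
    have := (hU _ hsX hc).unique ⟨hmem, by intro t; simp only [mem_insert, mem_singleton]; tauto⟩
      ⟨h1, by
        intro t ht
        simp only [mem_insert, mem_singleton] at ht
        rcases ht with rfl | rfl | rfl
        exacts [h2, hy.2, hz.2]⟩
    rw [← this, erase_insert]
    simp only [mem_insert, mem_singleton, not_or]
    refine ⟨fun e => hyx (Subtype.ext e), fun e => hzx (Subtype.ext e), fun e => ?_⟩
    exact h.ne (a := x) hyz (Subtype.ext e.symm)
  have BkD : ∀ k, Bk k ∈ derivedBlocks B x := fun k => hP'D (hBk k)
  -- counting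
  let N : Finset ℕ → Finset (Fin m × Fin 3) := fun T => univ.filter fun t => T ∈ P t.1 t.2
  have hN : ∀ T, (N T).card = 3 * (if T ∈ P' then 1 else 0) +
      2 * (if T ∈ derivedBlocks B x \ P' then 1 else 0) := by
    intro T
    have hc := congrArg (Multiset.count T) hsum
    simp only [Multiset.count_sum', Multiset.count_add, Multiset.count_nsmul,
      Multiset.count_eq_of_nodup (Finset.nodup _), Finset.mem_val] at hc
    rw [← hc, card_filter, Fintype.sum_prod_type]
  have PD : ∀ k l, ∀ T ∈ P k l, T ∈ derivedBlocks B x := by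
    intro k l T hT
    by_contra hn
    have h1 : T ∉ P' := fun h => hn (hP'D h)
    have h2 := hN T
    rw [if_neg h1, if_neg (by simp [hn])] at h2
    have h3 : N T = ∅ := card_eq_zero.1 (by simpa using h2)
    have : (k, l) ∈ N T := by simp [N, hT]
    rw [h3] at this
    simp at this
  have PBk : ∀ k' k l, Bk k' ∈ P k l → k = k' := by
    intro k' k l hk
    have h2 := hN (Bk k')
    rw [if_pos (hBk k'), if_neg (by simp [hBk k'])] at h2
    have hsub : (univ : Finset (Fin 3)).image (fun l => (k', l)) ⊆ N (Bk k') := by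
      intro t ht
      obtain ⟨l, -, rfl⟩ := mem_image.1 ht
      simp [N, hBP]
    have := eq_of_subset_of_card_le hsub (by
      rw [h2, card_image_of_injective _ (fun a b hab => (Prod.ext_iff.1 hab).2)]; simp)
    have hmem : (k, l) ∈ N (Bk k') := by simp [N, hk]
    rw [← this] at hmem
    obtain ⟨l', -, e⟩ := mem_image.1 hmem
    exact ((Prod.ext_iff.1 e).1).symm
  have hocc : ∀ T, ∃ f : ℕ → Fin m × Fin 3, T ∉ P' → ∀ k l, T ∈ P k l → ∃ t : Fin 2, f t = (k, l) := by
    intro T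
    by_cases hT : T ∈ P'
    · exact ⟨fun _ => (⟨0, hm⟩, 0), fun h => absurd hT h⟩
    · have h2 : (N T).card ≤ 2 := by
        rw [hN T, if_neg hT]; split_ifs <;> simp
      obtain ⟨f, hf⟩ := cover_two (N T) h2
      exact ⟨f, fun _ k l hkl => hf _ (by simp [N, hkl])⟩
  choose occ hocc using hocc
  have hkk : ∀ y : X, ∃ k, y ≠ x → y.1 ∈ Bk k := by
    intro y
    by_cases hyx : y = x
    · exact ⟨⟨0, hm⟩, fun h => absurd hyx h⟩
    · obtain ⟨b, ⟨h1, h2⟩, -⟩ := hP'.2 y.1 (mem_erase.2 ⟨fun e => hyx (Subtype.ext e), y.2⟩)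
      obtain ⟨k, rfl⟩ := hBks b h1
      exact ⟨k, fun _ => h2⟩
  choose kk hkk using hkk
  have kku : ∀ y : X, y ≠ x → ∀ k, y.1 ∈ Bk k → kk y = k := by
    intro y hy k hk
    apply hBki
    exact (hP'.2 y.1 (mem_erase.2 ⟨fun e => hy (Subtype.ext e), y.2⟩)).unique
      ⟨hBk _, hkk y hy⟩ ⟨hBk _, hk⟩
  obtain ⟨ψ, hψ⟩ := psi_exists
  let φ : X → Fin 4 := fun y => if y = x then 0 else ψ (Bk (kk y)) y
  have φn : ∀ y, y ≠ x → φ y = ψ (Bk (kk y)) y := fun y hy => by simp [φ, hy]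
  have hψB := fun k => hψ (Bk k) (Dcard _ (BkD k))
  have third : ∀ y z, y ≠ x → z ≠ x → y ≠ z → kk y = kk z → kk (q x y z) = kk y := by
    intro y z hy hz hyz hk
    have hT := Deq _ (BkD (kk y)) y z hyz (hkk y hy) (by rw [hk]; exact hkk z hz)
    apply kku _ (h.ne hyz)
    rw [← hT]; simp
  refine col_exists h x kk φ (fun y z => ({y.1, z.1, (q x y z).1} : Finset ℕ))
    (fun T y => ψ T y.1) occ ?_ ?_ ?_ ?_ ?_ ?_ ?_ ?_ i
  · intro y
    constructor
    · intro hy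
      by_contra hyx
      rw [φn y hyx] at hy
      exact (hψB _).1 _ (hkk y hyx) hy
    · rintro rfl; simp [φ]
  · intro y z hy hz hk he
    rw [φn y hy, φn z hz, ← hk] at he
    exact Subtype.ext ((hψB _).2.1 _ (hkk y hy) _ (by rw [hk]; exact hkk z hz) he)
  · intro y z hy hz hyz hk
    have h3 := third y z hy hz hyz hk
    refine ⟨h3, ?_⟩
    have hne : q x y z ≠ x := h.ne hyz
    rw [φn _ hne, φn _ hy, φn _ hz, h3, ← hk]
    refine (hψB _).2.2.2 _ (hkk y hy) _ (by rw [hk]; exact hkk z hz) _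
      (by rw [← h3]; exact hkk _ hne) (fun e => hyz (Subtype.ext e)) (fun e => ?_) (fun e => ?_)
    · exact h.ne2 hz.symm (Subtype.ext e)
    · exact h.ne3 hy.symm (Subtype.ext e)
  · intro k β hβ
    obtain ⟨y, hy, hyβ⟩ := (hψB k).2.2.1 β hβ
    have hyX := mem_erase.1 (hP'.1 _ (hBk k) hy)
    have hne : (⟨y, hyX.2⟩ : X) ≠ x := fun e => hyX.1 (congrArg Subtype.val e)
    have hk := kku ⟨y, hyX.2⟩ hne k hy
    exact ⟨⟨y, hyX.2⟩, hne, hk, by rw [φn _ hne, hk]; exact hyβ⟩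
  · intro y z
    rw [h.c23 x z y, Finset.insert_comm]
  · intro y z
    rw [h.inv, Finset.pair_comm]
  · intro y z hy hz hyz
    have n1 : y.1 ≠ z.1 := fun e => hyz (Subtype.ext e)
    have n2 : (q x y z).1 ≠ y.1 := fun e => h.ne2 hz.symm (Subtype.ext e)
    have n3 : (q x y z).1 ≠ z.1 := fun e => h.ne3 hy.symm (Subtype.ext e)
    obtain ⟨p1, p2, -, p4⟩ := hψ {y.1, z.1, (q x y z).1}
      (card_eq_three.2 ⟨_, _, _, n1, n2.symm, n3.symm, rfl⟩)
    refine ⟨p1 _ (by simp), p1 _ (by simp), fun e => n1 (p2 _ (by simp) _ (by simp) e),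
      p4 _ (by simp) _ (by simp) _ (by simp) n1 n2 n3⟩
  · intro y hy k l
    by_cases hk : kk y = k
    · exact Or.inl hk
    right
    obtain ⟨T, ⟨hT, hyT⟩, -⟩ := (hP k l).2 y.1 (mem_erase.2 ⟨fun e => hy (Subtype.ext e), y.2⟩)
    have hTD := PD k l T hT
    have hTP : T ∉ P' := by
      intro hh
      obtain ⟨k', rfl⟩ := hBks T hh
      have := PBk k' k l hT
      subst this
      exact hk (kku y hy _ hyT)
    obtain ⟨z, hz, hzy⟩ := exists_mem_ne (by rw [Dcard T hTD]; norm_num : 1 < T.card) y.1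
    have hzX := mem_erase.1 ((hP k l).1 T hT hz)
    have hyz : y ≠ ⟨z, hzX.2⟩ := fun e => hzy (congrArg Subtype.val e).symm
    have hzne : (⟨z, hzX.2⟩ : X) ≠ x := fun e => hzX.1 (congrArg Subtype.val e)
    have hTe := Deq T hTD y ⟨z, hzX.2⟩ hyz hyT hz
    refine ⟨⟨z, hzX.2⟩, hzne, ?_, ?_⟩
    · intro hkz
      apply hTP
      have := Deq _ (BkD (kk y)) y ⟨z, hzX.2⟩ hyz (hkk y hy) (by rw [hkz]; exact hkk _ hzne)
      rw [← hTe, this]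
      exact hBk _
    · simp only [hTe]
      exact hocc T hTP k l hT

/-- If there is an RDSQS*(v), then there is an RDSQS(4v). -/
theorem stmt_13 (v : ℕ) (h : ∃ X B, IsRDSQSstar v X B) :
    ExistsRDSQS (4 * v) := by
  obtain ⟨X, B, hS, hv, hx⟩ := h
  obtain ⟨q, hq, hqB⟩ := skein_of hS
  have hcX : Fintype.card (X × Fin 4) = 4 * v := by
    simp [hS.1]; ring
  rw [← hcX]
  refine generic (ι := Option ((Fin ((v - 1) / 3) × Fin 3) × Fin 2)) (pq_skein hq) ?_ ?_
  · rw [hcX]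
    simp
    omega
  · rintro ⟨x, i⟩
    by_cases hm : 0 < (v - 1) / 3
    · obtain ⟨P', Bk, P, h1, h2, h3, h4, h5, h6, h7, h8⟩ := hx x.1 x.2
      exact col_of_star hS hq hqB hm x P' Bk P h1 h2 h3 h4 h5 h6 h7 h8 i
    · refine ⟨fun _ _ => none, by simp, by simp, ?_⟩
      intro a _ c
      have hc : c = none := by
        rcases c with _ | ⟨⟨k, _⟩, _⟩
        · rfl
        · exact absurd k.pos hm
      have : ∀ i j : Fin 4, ∃ j', j' ≠ i ∧ j ≠ j' := by decide
      obtain ⟨j', h1, h2⟩ := this i a.2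
      exact ⟨(x, j'), fun e => h1 (Prod.ext_iff.1 e).2, fun e => h2 (Prod.ext_iff.1 e).2, hc.symm⟩
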